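/- arXiv:2408.08668 — 2 statements merged into one kernel-verified Lean document; each statement's English description precedes it below -/
import Mathlib

section
/- For every c ∈ ℝ, σ > 0, and α ∈ (0,1), writing q_α := VaR_α(N(c, σ²)), the tail expectation of the Gaussian measure N(c, σ²) equals the integral of its quantile function over upper levels: ∫_{[q_α, ∞)} x dN(c,σ²)(x) = ∫_α^1 VaR_y(N(c, σ²)) dy. Consequently, since N(c,σ²)([q_α, ∞)) = 1 − α, the conditional expectation of the Gaussian above its α-quantile equals (1/(1−α)) · ∫_α^1 VaR_y(N(c, σ²)) dy. -/
open MeasureTheory ProbabilityTheory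

/-- The `α`-level Value-at-Risk (the `α`-quantile) of a measure on `ℝ`. -/
noncomputable def VaR (μ : Measure ℝ) (α : ℝ) : ℝ :=
  sInf {z : ℝ | α ≤ cdf μ z}

/-! The Galois connection `VaR μ y ≤ x ↔ y ≤ cdf μ x` makes `VaR μ` push the uniform measure on
`(0, 1)` forward to `μ`. When `μ` has no atom at the `α`-quantile, the levels sent to
`[VaR μ α, ∞)` are exactly those of `[α, 1)`, so the tail of `μ` is the image of the uniform measure
on `(α, 1)`; both the tail expectation and the tail probability are read off from this. -/

section Quantile

variable (μ : Measure ℝ) {α y : ℝ}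

lemma VaR_le_iff_le_cdf (hy : y ∈ Set.Ioo (0 : ℝ) 1) (x : ℝ) : VaR μ y ≤ x ↔ y ≤ cdf μ x := by
  refine ⟨fun hx => ?_, fun hx => csInf_le ?bddBelow hx⟩
  case bddBelow =>
    obtain ⟨b, hb⟩ := ((tendsto_cdf_atBot μ).eventually_lt_const hy.1).exists
    exact ⟨b, fun z hz => ((monotone_cdf μ).reflect_lt (hb.trans_le hz)).le⟩
  have nonempty : {z : ℝ | y ≤ cdf μ z}.Nonempty :=
    ((tendsto_cdf_atTop μ).eventually_const_le hy.2).exists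
  by_contra! hxy
  obtain ⟨w, hwy, hxw⟩ : ∃ w, cdf μ w < y ∧ x < w :=
    ((((cdf μ).right_continuous x).mono Set.Ioi_subset_Ici_self).eventually_lt_const hxy
      |>.and self_mem_nhdsWithin).exists
  have hw : w ≤ VaR μ y :=
    le_csInf nonempty fun z hz => ((monotone_cdf μ).reflect_lt (hwy.trans_le hz)).le
  exact (hxw.trans_le hw).not_ge hx

lemma le_cdf_VaR (hy : y ∈ Set.Ioo (0 : ℝ) 1) : y ≤ cdf μ (VaR μ y) :=
  (VaR_le_iff_le_cdf μ hy _).1 le_rfl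

lemma monotoneOn_VaR : MonotoneOn (VaR μ) (Set.Ioo 0 1) := fun _ ha _ hb hab =>
  (VaR_le_iff_le_cdf μ ha _).2 (hab.trans (le_cdf_VaR μ hb))

lemma aemeasurable_VaR_restrict_Ioo (hα : 0 ≤ α) :
    AEMeasurable (VaR μ) (volume.restrict (Set.Ioo α 1)) :=
  aemeasurable_restrict_of_monotoneOn measurableSet_Ioo
    ((monotoneOn_VaR μ).mono (Set.Ioo_subset_Ioo_left hα))

lemma leftLim_cdf_VaR_le (hy : y ∈ Set.Ioo (0 : ℝ) 1) :
    Function.leftLim (cdf μ) (VaR μ y) ≤ y := by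
  refine le_of_tendsto ((monotone_cdf μ).tendsto_leftLim _) ?_
  filter_upwards [self_mem_nhdsWithin] with w hw
  exact (lt_of_not_ge fun h => (Set.mem_Iio.1 hw).not_ge ((VaR_le_iff_le_cdf μ hy w).2 h)).le

variable [IsProbabilityMeasure μ]

lemma cdf_VaR (hy : y ∈ Set.Ioo (0 : ℝ) 1) (hatom : μ {VaR μ y} = 0) :
    cdf μ (VaR μ y) = y := by
  have hjump : cdf μ (VaR μ y) - Function.leftLim (cdf μ) (VaR μ y) ≤ 0 := by
    rwa [← ENNReal.ofReal_eq_zero, ← StieltjesFunction.measure_singleton, measure_cdf]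
  exact le_antisymm ((sub_nonpos.1 hjump).trans (leftLim_cdf_VaR_le μ hy)) (le_cdf_VaR μ hy)

lemma VaR_le_VaR_iff (hα : α ∈ Set.Ioo (0 : ℝ) 1) (hy : y ∈ Set.Ioo (0 : ℝ) 1)
    (hatom : μ {VaR μ α} = 0) : VaR μ α ≤ VaR μ y ↔ α ≤ y := by
  refine ⟨fun hVaR => ?_, fun hαy => monotoneOn_VaR μ hα hy hαy⟩
  by_contra! hyα
  have hVaR_eq : VaR μ y = VaR μ α := (monotoneOn_VaR μ hy hα hyα.le).antisymm hVaR
  have hcdf : cdf μ (VaR μ α) = y := hVaR_eq ▸ cdf_VaR μ hy (hVaR_eq ▸ hatom)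
  exact hyα.ne (hcdf.symm.trans (cdf_VaR μ hα hatom))

lemma map_VaR_restrict_Ioo_zero_one : (volume.restrict (Set.Ioo 0 1)).map (VaR μ) = μ := by
  have hfinite : IsFiniteMeasure ((volume.restrict (Set.Ioo (0 : ℝ) 1)).map (VaR μ)) :=
    Measure.isFiniteMeasure_map _ _
  refine Measure.ext_of_Iic _ _ fun x => ?_
  have hpreimage : VaR μ ⁻¹' Set.Iic x ∩ Set.Ioo 0 1 = Set.Iic (cdf μ x) ∩ Set.Ioo 0 1 :=
    Set.ext fun y => and_congr_left fun hy => VaR_le_iff_le_cdf μ hy x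
  calc (volume.restrict (Set.Ioo 0 1)).map (VaR μ) (Set.Iic x)
      = volume (Set.Iic (cdf μ x) ∩ Set.Ioo 0 1) := by
        rw [Measure.map_apply_of_aemeasurable (aemeasurable_VaR_restrict_Ioo μ le_rfl)
          measurableSet_Iic, Measure.restrict_apply' measurableSet_Ioo, hpreimage]
    _ = volume (Set.Iic (cdf μ x) ∩ Set.Ioc 0 1) :=
        measure_congr ((Filter.EventuallyEq.refl _ _).inter Ioo_ae_eq_Ioc)
    _ = ENNReal.ofReal (cdf μ x) := by
        rw [Set.inter_comm, Set.Ioc_inter_Iic, inf_eq_right.2 (cdf_le_one μ x), Real.volume_Ioc,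
          sub_zero]
    _ = μ (Set.Iic x) := ofReal_cdf μ x

lemma map_VaR_restrict_Ioo (hα : α ∈ Set.Ioo (0 : ℝ) 1) (hatom : μ {VaR μ α} = 0) :
    (volume.restrict (Set.Ioo α 1)).map (VaR μ) = μ.restrict (Set.Ici (VaR μ α)) := by
  have hpreimage : VaR μ ⁻¹' Set.Ici (VaR μ α) ∩ Set.Ioo 0 1 = Set.Ico α 1 := by
    ext y
    constructor
    · rintro ⟨hVaR, hy⟩
      exact ⟨(VaR_le_VaR_iff μ hα hy hatom).1 hVaR, hy.2⟩
    · rintro ⟨hαy, hy⟩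
      have hy01 : y ∈ Set.Ioo (0 : ℝ) 1 := ⟨hα.1.trans_le hαy, hy⟩
      exact ⟨(VaR_le_VaR_iff μ hα hy01 hatom).2 hαy, hy01⟩
  calc (volume.restrict (Set.Ioo α 1)).map (VaR μ)
      = ((volume.restrict (Set.Ioo 0 1)).restrict (VaR μ ⁻¹' Set.Ici (VaR μ α))).map (VaR μ) := by
        rw [Measure.restrict_restrict' measurableSet_Ioo, hpreimage,
          Measure.restrict_congr_set Ioo_ae_eq_Ico]
    _ = ((volume.restrict (Set.Ioo 0 1)).map (VaR μ)).restrict (Set.Ici (VaR μ α)) :=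
        (Measure.restrict_map_of_aemeasurable (aemeasurable_VaR_restrict_Ioo μ le_rfl)
          measurableSet_Ici).symm
    _ = μ.restrict (Set.Ici (VaR μ α)) := by rw [map_VaR_restrict_Ioo_zero_one]

lemma measure_Ici_VaR (hα : α ∈ Set.Ioo (0 : ℝ) 1) (hatom : μ {VaR μ α} = 0) :
    μ (Set.Ici (VaR μ α)) = ENNReal.ofReal (1 - α) := by
  rw [← Measure.restrict_apply_univ, ← map_VaR_restrict_Ioo μ hα hatom,
    Measure.map_apply_of_aemeasurable (aemeasurable_VaR_restrict_Ioo μ hα.1.le) .univ,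
    Set.preimage_univ, Measure.restrict_apply_univ, Real.volume_Ioo]

variable {E : Type*} [NormedAddCommGroup E]

lemma integrableOn_Ici_VaR_iff {f : ℝ → E} (hα : α ∈ Set.Ioo (0 : ℝ) 1)
    (hatom : μ {VaR μ α} = 0) (hf : AEStronglyMeasurable f (μ.restrict (Set.Ici (VaR μ α)))) :
    IntegrableOn f (Set.Ici (VaR μ α)) μ ↔
      IntervalIntegrable (fun y => f (VaR μ y)) volume α 1 := by
  rw [← map_VaR_restrict_Ioo μ hα hatom] at hf
  rw [IntegrableOn, ← map_VaR_restrict_Ioo μ hα hatom,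
    integrable_map_measure hf (aemeasurable_VaR_restrict_Ioo μ hα.1.le),
    intervalIntegrable_iff_integrableOn_Ioo_of_le hα.2.le]
  rfl

lemma setIntegral_Ici_VaR [NormedSpace ℝ E] {f : ℝ → E} (hα : α ∈ Set.Ioo (0 : ℝ) 1)
    (hatom : μ {VaR μ α} = 0) (hf : AEStronglyMeasurable f (μ.restrict (Set.Ici (VaR μ α)))) :
    ∫ x in Set.Ici (VaR μ α), f x ∂μ = ∫ y in α..1, f (VaR μ y) := by
  rw [← map_VaR_restrict_Ioo μ hα hatom] at hf ⊢
  rw [integral_map (aemeasurable_VaR_restrict_Ioo μ hα.1.le) hf,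
    intervalIntegral.integral_of_le hα.2.le, integral_Ioc_eq_integral_Ioo]

end Quantile

theorem tail_expectation_gaussian_general (μ : Measure ℝ) [IsProbabilityMeasure μ] {α : ℝ}
    (hα : α ∈ Set.Ioo (0 : ℝ) 1) (hatom : μ {VaR μ α} = 0)
    (hint : IntegrableOn (fun x => x) (Set.Ici (VaR μ α)) μ) :
    IntervalIntegrable (VaR μ) volume α 1
    ∧ ∫ x in Set.Ici (VaR μ α), x ∂μ = ∫ y in α..1, VaR μ y
    ∧ μ (Set.Ici (VaR μ α)) = ENNReal.ofReal (1 - α)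
    ∧ (∫ x in Set.Ici (VaR μ α), x ∂μ) / (μ (Set.Ici (VaR μ α))).toReal
      = (1 / (1 - α)) * ∫ y in α..1, VaR μ y := by
  have hmeasure := measure_Ici_VaR μ hα hatom
  have hintegral := setIntegral_Ici_VaR μ hα hatom hint.aestronglyMeasurable
  refine ⟨(integrableOn_Ici_VaR_iff μ hα hatom hint.aestronglyMeasurable).1 hint,
    hintegral, hmeasure, ?_⟩
  rw [hintegral, hmeasure, ENNReal.toReal_ofReal (sub_nonneg.2 hα.2.le), div_eq_mul_one_div,
    mul_comm]

/-- The Gaussian tail expectation above the `α`-quantile equals the integral of the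
quantile function over upper levels; the tail has probability `1 - α`; and consequently
the conditional expectation above the quantile equals `(1/(1-α)) ∫_α^1 VaR_y dy`. -/
theorem tail_expectation_gaussian (c σ : ℝ) (hσ : 0 < σ) (α : ℝ)
    (hα : α ∈ Set.Ioo (0 : ℝ) 1) :
    (∫ x in Set.Ici (VaR (gaussianReal c ⟨σ ^ 2, by positivity⟩) α), x
        ∂(gaussianReal c ⟨σ ^ 2, by positivity⟩))
      = (∫ y in α..1, VaR (gaussianReal c ⟨σ ^ 2, by positivity⟩) y)
    ∧ gaussianReal c ⟨σ ^ 2, by positivity⟩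
        (Set.Ici (VaR (gaussianReal c ⟨σ ^ 2, by positivity⟩) α)) = ENNReal.ofReal (1 - α)
    ∧ (∫ x in Set.Ici (VaR (gaussianReal c ⟨σ ^ 2, by positivity⟩) α), x
          ∂(gaussianReal c ⟨σ ^ 2, by positivity⟩))
        / (gaussianReal c ⟨σ ^ 2, by positivity⟩
            (Set.Ici (VaR (gaussianReal c ⟨σ ^ 2, by positivity⟩) α))).toReal
      = (1 / (1 - α)) * ∫ y in α..1, VaR (gaussianReal c ⟨σ ^ 2, by positivity⟩) y := by
  have hvar : (⟨σ ^ 2, by positivity⟩ : NNReal) ≠ 0 := Subtype.coe_ne_coe.1 (pow_pos hσ 2).ne'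
  have := nullSingletonClass_gaussianReal (μ := c) hvar
  exact (tail_expectation_gaussian_general _ hα (measure_singleton _)
    ((memLp_id_gaussianReal 1).integrable le_rfl).integrableOn).2
end

section
/- For every c ∈ ℝ, σ > 0, and α ∈ (0,1), the Rockafellar–Uryasev infimum for the Gaussian measure N(c, σ²) satisfies ⨅_{z ∈ ℝ} ( z + (1/(1−α)) · ∫ max(x − z, 0) dN(c,σ²)(x) ) = c + σ · φ(VaR_α(N(0,1)))/(1−α), where φ(x) = (2π)^{-1/2}·exp(−x²/2); moreover the infimum is attained at z = VaR_α(N(c, σ²)) = c + σ · VaR_α(N(0,1)). -/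
open MeasureTheory ProbabilityTheory

/-- The standard normal probability density function `φ(x) = (2π)^{-1/2} exp(-x²/2)`. -/
noncomputable def stdNormalPDF (x : ℝ) : ℝ :=
  (Real.sqrt (2 * Real.pi))⁻¹ * Real.exp (-(x ^ 2) / 2)

/-!
With `q` the `α`-quantile of `μ`, both `μ (q, ∞) ≤ 1 - α ≤ μ [q, ∞)`. Hence `0` lies between the
one-sided slopes `1 - μ [q, ∞) / (1 - α)` and `1 - μ (q, ∞) / (1 - α)` at `q` of the convex function
`z ↦ z + E[(X - z)⁺] / (1 - α)`, which is therefore minimal at `q`. If `μ` has no atoms, both tails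
have mass `1 - α`, and the minimum collapses to the tail mean `E[X; X > q] / (1 - α)`. For `N(m, v)`
the tail mean is explicit because the density `p` satisfies `(x - m) p(x) = -v p'(x)`.
-/

open Filter Set
open scoped NNReal Topology

section Quantile

variable {μ : Measure ℝ} {α : ℝ}

theorem VaR_le_iff (hα : α ∈ Ioo (0 : ℝ) 1) {z : ℝ} : VaR μ α ≤ z ↔ α ≤ cdf μ z := by
  have hne : {y : ℝ | α ≤ cdf μ y}.Nonempty :=
    ((tendsto_cdf_atTop μ).eventually_const_le hα.2).exists
  have hbdd : BddBelow {y : ℝ | α ≤ cdf μ y} := by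
    obtain ⟨b, hb⟩ := ((tendsto_cdf_atBot μ).eventually_lt_const hα.1).exists
    exact ⟨b, fun y hy => ((monotone_cdf μ).reflect_lt (hb.trans_le hy)).le⟩
  refine ⟨fun hz => ?_, fun hz => csInf_le hbdd hz⟩
  have hright : Tendsto (cdf μ) (𝓝[>] z) (𝓝 (cdf μ z)) :=
    ((cdf μ).right_continuous z).mono_left (nhdsWithin_mono z Ioi_subset_Ici_self)
  refine ge_of_tendsto hright ?_
  filter_upwards [self_mem_nhdsWithin] with y hy
  obtain ⟨x, hx, hxy⟩ := exists_lt_of_csInf_lt hne (hz.trans_lt hy)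
  exact hx.trans (monotone_cdf μ hxy.le)

theorem le_measureReal_Iic_VaR [IsProbabilityMeasure μ] (hα : α ∈ Ioo (0 : ℝ) 1) :
    α ≤ μ.real (Iic (VaR μ α)) :=
  cdf_eq_real μ _ ▸ (VaR_le_iff hα).1 le_rfl

theorem measureReal_Iio_VaR_le [IsProbabilityMeasure μ] (hα : α ∈ Ioo (0 : ℝ) 1) :
    μ.real (Iio (VaR μ α)) ≤ α := by
  have hleft : Function.leftLim (cdf μ) (VaR μ α) ≤ α := by
    refine le_of_tendsto ((monotone_cdf μ).tendsto_leftLim _) ?_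
    filter_upwards [self_mem_nhdsWithin] with y hy
    exact (not_le.1 fun h => (not_le.2 hy) ((VaR_le_iff hα).2 h)).le
  have hIio : μ (Iio (VaR μ α)) = ENNReal.ofReal (Function.leftLim (cdf μ) (VaR μ α)) := by
    simpa [measure_cdf] using (cdf μ).measure_Iio (tendsto_cdf_atBot μ) (VaR μ α)
  exact ENNReal.toReal_le_of_le_ofReal hα.1.le (hIio.le.trans (ENNReal.ofReal_le_ofReal hleft))

theorem measureReal_Ioi_VaR_le [IsProbabilityMeasure μ] (hα : α ∈ Ioo (0 : ℝ) 1) :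
    μ.real (Ioi (VaR μ α)) ≤ 1 - α := by
  rw [← compl_Iic, probReal_compl_eq_one_sub measurableSet_Iic]
  linarith [le_measureReal_Iic_VaR (μ := μ) hα]

theorem le_measureReal_Ici_VaR [IsProbabilityMeasure μ] (hα : α ∈ Ioo (0 : ℝ) 1) :
    1 - α ≤ μ.real (Ici (VaR μ α)) := by
  rw [← compl_Iio, probReal_compl_eq_one_sub measurableSet_Iio]
  linarith [measureReal_Iio_VaR_le (μ := μ) hα]

theorem measureReal_Ioi_VaR [IsProbabilityMeasure μ] [NullSingletonClass μ]
    (hα : α ∈ Ioo (0 : ℝ) 1) : μ.real (Ioi (VaR μ α)) = 1 - α :=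
  (measureReal_Ioi_VaR_le hα).antisymm <|
    (le_measureReal_Ici_VaR hα).trans_eq (measureReal_congr Ioi_ae_eq_Ici).symm

theorem cdf_map_const_add_mul [IsProbabilityMeasure μ] (c : ℝ) {σ : ℝ} (hσ : 0 < σ) (z : ℝ) :
    cdf (μ.map (fun x => c + σ * x)) z = cdf μ ((z - c) / σ) := by
  have : IsProbabilityMeasure (μ.map (fun x => c + σ * x)) :=
    Measure.isProbabilityMeasure_map (by fun_prop)
  rw [cdf_eq_real, cdf_eq_real, map_measureReal_apply (by fun_prop) measurableSet_Iic]
  congr 1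
  ext x
  simp only [mem_preimage, mem_Iic]
  rw [le_div_iff₀' hσ, le_sub_iff_add_le']

theorem VaR_map_const_add_mul [IsProbabilityMeasure μ] (c : ℝ) {σ : ℝ} (hσ : 0 < σ)
    (hα : α ∈ Ioo (0 : ℝ) 1) :
    VaR (μ.map (fun x => c + σ * x)) α = c + σ * VaR μ α := by
  refine eq_of_forall_ge_iff fun z => ?_
  rw [VaR_le_iff hα, cdf_map_const_add_mul c hσ, ← VaR_le_iff hα, le_div_iff₀' hσ,
    le_sub_iff_add_le']

end Quantile

section RockafellarUryasev

variable {μ : Measure ℝ} {α : ℝ}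

/-- The Rockafellar–Uryasev objective `z + E[(X - z)⁺] / (1 - α)` of a law `μ`, whose infimum over
`z` is the conditional Value-at-Risk of `μ` at level `α`. -/
noncomputable def rockafellarUryasev (μ : Measure ℝ) (α z : ℝ) : ℝ :=
  z + (1 / (1 - α)) * ∫ x, max (x - z) 0 ∂μ

theorem integrable_max_sub_zero [IsFiniteMeasure μ] (hμ : Integrable (fun x => x) μ) (z : ℝ) :
    Integrable (fun x => max (x - z) 0) μ :=
  (hμ.sub (integrable_const z)).pos_part

/-- The choices `s = Ioi q` and `s = Ici q` give the right and the left slope at `q`. -/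
theorem integral_max_sub_add_measureReal_mul_le [IsFiniteMeasure μ]
    (hμ : Integrable (fun x => x) μ) {s : Set ℝ} (hs : MeasurableSet s) {q : ℝ}
    (hqs : Ioi q ⊆ s) (hsq : s ⊆ Ici q) (z : ℝ) :
    ∫ x, max (x - q) 0 ∂μ + μ.real s * (q - z) ≤ ∫ x, max (x - z) 0 ∂μ := by
  have hind : Integrable (s.indicator fun _ => q - z) μ := (integrable_const _).indicator hs
  rw [← smul_eq_mul, ← integral_indicator_const _ hs,
    ← integral_add (integrable_max_sub_zero hμ q) hind]
  refine integral_mono ((integrable_max_sub_zero hμ q).add hind) (integrable_max_sub_zero hμ z)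
    fun x => ?_
  by_cases hx : x ∈ s
  · have hqx : 0 ≤ x - q := sub_nonneg.2 (hsq hx)
    simp [hx, max_eq_left hqx]
  · have hxq : x - q ≤ 0 := sub_nonpos.2 (not_lt.1 fun h => hx (hqs h))
    simp [hx, max_eq_right hxq]

theorem rockafellarUryasev_VaR_le [IsProbabilityMeasure μ] (hμ : Integrable (fun x => x) μ)
    (hα : α ∈ Ioo (0 : ℝ) 1) (z : ℝ) :
    rockafellarUryasev μ α (VaR μ α) ≤ rockafellarUryasev μ α z := by
  set q := VaR μ α
  have hα' : 0 < 1 - α := sub_pos.2 hα.2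
  have hsub : ∫ x, max (x - q) 0 ∂μ + (1 - α) * (q - z) ≤ ∫ x, max (x - z) 0 ∂μ := by
    rcases le_total q z with hqz | hzq
    · refine le_trans ?_ (integral_max_sub_add_measureReal_mul_le hμ (q := q)
        measurableSet_Ioi subset_rfl Ioi_subset_Ici_self z)
      have := mul_le_mul_of_nonpos_right (measureReal_Ioi_VaR_le (μ := μ) hα) (sub_nonpos.2 hqz)
      gcongr
    · refine le_trans ?_ (integral_max_sub_add_measureReal_mul_le hμ (q := q)
        measurableSet_Ici Ioi_subset_Ici_self subset_rfl z)
      have := mul_le_mul_of_nonneg_right (le_measureReal_Ici_VaR (μ := μ) hα) (sub_nonneg.2 hzq)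
      gcongr
  calc rockafellarUryasev μ α q
      = z + 1 / (1 - α) * (∫ x, max (x - q) 0 ∂μ + (1 - α) * (q - z)) := by
        rw [rockafellarUryasev]
        field_simp
        ring
    _ ≤ rockafellarUryasev μ α z := by
        rw [rockafellarUryasev]
        gcongr

theorem iInf_rockafellarUryasev [IsProbabilityMeasure μ] (hμ : Integrable (fun x => x) μ)
    (hα : α ∈ Ioo (0 : ℝ) 1) :
    ⨅ z, rockafellarUryasev μ α z = rockafellarUryasev μ α (VaR μ α) :=
  have hmin := rockafellarUryasev_VaR_le hμ hα
  (ciInf_le ⟨_, forall_mem_range.2 hmin⟩ _).antisymm (le_ciInf hmin)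

theorem integral_max_sub_zero [IsFiniteMeasure μ] (hμ : Integrable (fun x => x) μ) (q : ℝ) :
    ∫ x, max (x - q) 0 ∂μ = ∫ x in Ioi q, x ∂μ - μ.real (Ioi q) * q := by
  have hind : (fun x => max (x - q) 0) = (Ioi q).indicator fun x => x - q := by
    ext x
    rcases lt_or_ge q x with hx | hx
    · simp [hx, hx.le]
    · simp [hx]
  rw [hind, integral_indicator measurableSet_Ioi,
    integral_sub hμ.integrableOn (integrable_const q), setIntegral_const, smul_eq_mul]

theorem rockafellarUryasev_VaR [IsProbabilityMeasure μ] [NullSingletonClass μ]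
    (hμ : Integrable (fun x => x) μ) (hα : α ∈ Ioo (0 : ℝ) 1) :
    rockafellarUryasev μ α (VaR μ α) = (∫ x in Ioi (VaR μ α), x ∂μ) / (1 - α) := by
  have hα' : 1 - α ≠ 0 := (sub_pos.2 hα.2).ne'
  rw [rockafellarUryasev, integral_max_sub_zero hμ, measureReal_Ioi_VaR hα]
  field_simp
  ring

end RockafellarUryasev

section Gaussian

theorem integrable_id_gaussianReal (m : ℝ) (v : ℝ≥0) :
    Integrable (fun x => x) (gaussianReal m v) :=
  (memLp_id_gaussianReal 1).integrable le_rfl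

theorem hasDerivAt_gaussianPDFReal (m : ℝ) (v : ℝ≥0) (x : ℝ) :
    HasDerivAt (gaussianPDFReal m v) (-((x - m) / v * gaussianPDFReal m v x)) x := by
  have hexponent : HasDerivAt (fun y : ℝ => -(y - m) ^ 2 / (2 * v)) (-((x - m) / v)) x := by
    refine ((((hasDerivAt_id x).sub_const m).pow 2).neg.div_const (2 * (v : ℝ))).congr_deriv ?_
    simp only [id]
    field_simp
    ring
  refine (hexponent.exp.const_mul (√(2 * Real.pi * v))⁻¹).congr_deriv ?_
  rw [gaussianPDFReal]
  ring

theorem integrable_gaussianPDFReal_mul_sub (m : ℝ) {v : ℝ≥0} (hv : v ≠ 0) :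
    Integrable fun x => gaussianPDFReal m v x * (x - m) := by
  have h := (integrable_id_gaussianReal m v).sub (integrable_const m)
  rw [gaussianReal_of_var_ne_zero m hv, integrable_withDensity_iff_integrable_smul'
    (measurable_gaussianPDF m v) (ae_of_all _ fun _ => gaussianPDF_lt_top)] at h
  simpa [toReal_gaussianPDF] using h

theorem setIntegral_Ioi_gaussianPDFReal_mul_sub (m : ℝ) {v : ℝ≥0} (hv : v ≠ 0) (q : ℝ) :
    ∫ x in Ioi q, gaussianPDFReal m v x * (x - m) = v * gaussianPDFReal m v q := by
  have hderiv (x : ℝ) : HasDerivAt (fun y => -(v * gaussianPDFReal m v y))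
      (gaussianPDFReal m v x * (x - m)) x := by
    refine ((hasDerivAt_gaussianPDFReal m v x).const_mul (v : ℝ)).neg.congr_deriv ?_
    field_simp
  have hint := (integrable_gaussianPDFReal_mul_sub m hv).integrableOn (s := Ioi q)
  have hlim : Tendsto (fun y => -(v * gaussianPDFReal m v y)) atTop (𝓝 0) :=
    tendsto_zero_of_hasDerivAt_of_integrableOn_Ioi (fun x _ => hderiv x) hint
      ((integrable_gaussianPDFReal m v).const_mul _).neg.integrableOn
  rw [integral_Ioi_of_hasDerivAt_of_tendsto' (fun x _ => hderiv x) hint hlim]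
  ring

theorem setIntegral_Ioi_id_gaussianReal (m : ℝ) {v : ℝ≥0} (hv : v ≠ 0) (q : ℝ) :
    ∫ x in Ioi q, x ∂(gaussianReal m v)
      = m * (gaussianReal m v).real (Ioi q) + v * gaussianPDFReal m v q := by
  have hcentered : ∫ x in Ioi q, (x - m) ∂(gaussianReal m v) = v * gaussianPDFReal m v q := by
    rw [← setIntegral_Ioi_gaussianPDFReal_mul_sub m hv q, ← integral_indicator measurableSet_Ioi,
      ← integral_indicator measurableSet_Ioi, integral_gaussianReal_eq_integral_smul hv]
    simp only [smul_eq_mul, ← indicator_mul_right]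
  rw [← hcentered, integral_sub (integrable_id_gaussianReal m v).integrableOn (integrable_const m),
    setIntegral_const, smul_eq_mul]
  ring

theorem rockafellarUryasev_VaR_gaussianReal (m : ℝ) {v : ℝ≥0} (hv : v ≠ 0) {α : ℝ}
    (hα : α ∈ Ioo (0 : ℝ) 1) :
    rockafellarUryasev (gaussianReal m v) α (VaR (gaussianReal m v) α)
      = m + v * gaussianPDFReal m v (VaR (gaussianReal m v) α) / (1 - α) := by
  have := nullSingletonClass_gaussianReal (μ := m) hv
  have hα' : 1 - α ≠ 0 := (sub_pos.2 hα.2).ne'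
  rw [rockafellarUryasev_VaR (integrable_id_gaussianReal m v) hα,
    setIntegral_Ioi_id_gaussianReal m hv, measureReal_Ioi_VaR hα]
  field_simp

variable (c : ℝ) {σ : ℝ} {v : ℝ≥0}

theorem VaR_gaussianReal (hσ : 0 < σ) (hv : (v : ℝ) = σ ^ 2) {α : ℝ} (hα : α ∈ Ioo (0 : ℝ) 1) :
    VaR (gaussianReal c v) α = c + σ * VaR (gaussianReal 0 1) α := by
  have hmap : (gaussianReal 0 1).map (fun x => c + σ * x) = gaussianReal c v := by
    rw [← Function.comp_def (c + ·) (σ * ·), ← Measure.map_map (by fun_prop) (by fun_prop),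
      gaussianReal_map_const_mul, gaussianReal_map_const_add, mul_zero, zero_add, mul_one]
    exact congrArg (gaussianReal c) (NNReal.eq hv.symm)
  rw [← hmap, VaR_map_const_add_mul c hσ hα]

theorem mul_gaussianPDFReal_add_mul (hσ : 0 < σ) (hv : (v : ℝ) = σ ^ 2) (x : ℝ) :
    v * gaussianPDFReal c v (c + σ * x) = σ * stdNormalPDF x := by
  have hsqrt : √(2 * Real.pi * σ ^ 2) = √(2 * Real.pi) * σ := by
    rw [Real.sqrt_mul (by positivity), Real.sqrt_sq hσ.le]
  have hexponent : -(c + σ * x - c) ^ 2 / (2 * σ ^ 2) = -x ^ 2 / 2 := by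
    field_simp
    ring
  rw [gaussianPDFReal, stdNormalPDF, hv, hsqrt, hexponent]
  field_simp

end Gaussian

/-- The Rockafellar–Uryasev infimum for a Gaussian measure equals the CVaR closed form,
and is attained at `z = VaR_α(N(c, σ²)) = c + σ · VaR_α(N(0,1))`. -/
theorem rockafellar_uryasev_gaussian (c σ : ℝ) (hσ : 0 < σ) (α : ℝ)
    (hα : α ∈ Set.Ioo (0 : ℝ) 1) :
    (⨅ z : ℝ, (z + (1 / (1 - α)) *
        ∫ x, max (x - z) 0 ∂(gaussianReal c ⟨σ ^ 2, by positivity⟩)))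
      = c + σ * stdNormalPDF (VaR (gaussianReal 0 1) α) / (1 - α)
    ∧ (VaR (gaussianReal c ⟨σ ^ 2, by positivity⟩) α + (1 / (1 - α)) *
        ∫ x, max (x - VaR (gaussianReal c ⟨σ ^ 2, by positivity⟩) α) 0
          ∂(gaussianReal c ⟨σ ^ 2, by positivity⟩))
      = c + σ * stdNormalPDF (VaR (gaussianReal 0 1) α) / (1 - α)
    ∧ VaR (gaussianReal c ⟨σ ^ 2, by positivity⟩) α
      = c + σ * VaR (gaussianReal 0 1) α := by
  have hv : (NNReal.mk (σ ^ 2) (sq_nonneg σ) : ℝ) = σ ^ 2 := rfl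
  have hv_ne : NNReal.mk (σ ^ 2) (sq_nonneg σ) ≠ 0 := NNReal.coe_ne_zero.1 (pow_ne_zero 2 hσ.ne')
  have hVaR := VaR_gaussianReal c hσ hv hα
  have hvalue := rockafellarUryasev_VaR_gaussianReal c hv_ne hα
  rw [hVaR, mul_gaussianPDFReal_add_mul c hσ hv, ← hVaR] at hvalue
  exact ⟨(iInf_rockafellarUryasev (integrable_id_gaussianReal c _) hα).trans hvalue, hvalue, hVaR⟩
end
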